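/- arXiv:1901.08111 — 5 statements merged into one kernel-verified Lean document; each statement's English description precedes it below -/
import Mathlib

section
/- Let p be a prime, n ≥ 1 and m ≥ 2 integers, and let ψ be an additive character of ℚ_p of conductor m. Let f ∈ ℤ_p[x₁,…,xₙ] and let S be any subset of 𝔽_pⁿ. Then ∫_{{x ∈ ℤ_pⁿ : x̄ ∈ S and v_p(f(x)) ≥ m−1}} ψ(f(x)) dx = ∫_{{x ∈ ℤ_pⁿ : x̄ ∈ S, v_p(f(x)) ≥ m−1, and v_p(∂ᵢf(x)·∂ⱼf(x)) ≥ m−1 for all 1 ≤ i,j ≤ n}} ψ(f(x)) dx. -/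
open MeasureTheory MvPolynomial

/-!
The two domains differ by the points where the gradient of `f` has minimal valuation `k` with
`2 * k < M`, where `M = m - 1`. These points form finitely many disjoint sets
`gradStratum f S M k`, and the integral over each vanishes by a stationary phase argument.

By Taylor expansion, for every `y ∈ ℤ_pⁿ`,
`f (x + p ^ (M - k) y) ≡ f x + p ^ (M - k) ∑ i, ∂ᵢf(x) yᵢ` modulo `p ^ (2 * (M - k))`, and
`2 * (M - k) ≥ M + 1 = m`. The same expansion, applied to `f` and to its derivatives, shows that the
stratum is stable under translation by `p ^ (M - k) y`; in particular it is open. Invariance of Haar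
measure then lets one average the integrand over `y ∈ {0, …, p - 1}ⁿ`. The average carries the factor
`∏ i, ∑ t < p, ψ (p ^ (M - k) ∂ᵢf(x)) ^ t`. Each `ψ (p ^ (M - k) ∂ᵢf(x))` is a `p`-th root of unity,
nontrivial for an index `i` at which the valuation `k` is attained, so one of the geometric sums is
zero.
-/

/-! ### First-order Taylor expansion of a polynomial -/

theorem exists_eval_add_smul_eq {R : Type*} [CommRing R] {n : ℕ} (f : MvPolynomial (Fin n) R)
    (x y : Fin n → R) (a : R) :
    ∃ r, eval (x + a • y) f
      = eval x f + a * ∑ i, eval x (pderiv i f) * y i + a ^ 2 * r := by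
  induction f using MvPolynomial.induction_on with
  | C c => exact ⟨0, by simp⟩
  | add f g hf hg =>
    obtain ⟨r, hr⟩ := hf
    obtain ⟨s, hs⟩ := hg
    refine ⟨r + s, ?_⟩
    simp only [map_add, hr, hs, add_mul, Finset.sum_add_distrib]
    ring
  | mul_X f j hf =>
    obtain ⟨r, hr⟩ := hf
    refine ⟨r * (x j + a * y j) + (∑ i, eval x (pderiv i f) * y i) * y j, ?_⟩
    have h : ∑ i, eval x (pderiv i (f * X j)) * y i
        = (∑ i, eval x (pderiv i f) * y i) * x j + eval x f * y j := by
      simp only [pderiv_mul, map_add, map_mul, eval_X, add_mul, Finset.sum_add_distrib,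
        pderiv_X, Finset.sum_mul]
      congr 1
      · exact Finset.sum_congr rfl fun i _ => by ring
      · rw [Finset.sum_eq_single j] <;> simp +contextual [eq_comm]
    rw [h]
    simp only [map_mul, eval_X, hr, Pi.add_apply, Pi.smul_apply, smul_eq_mul]
    ring

theorem dvd_eval_add_smul_sub {R : Type*} [CommRing R] {n : ℕ} (f : MvPolynomial (Fin n) R)
    (x y : Fin n → R) (a : R) : a ∣ eval (x + a • y) f - eval x f := by
  obtain ⟨r, hr⟩ := exists_eval_add_smul_eq f x y a
  exact ⟨∑ i, eval x (pderiv i f) * y i + a * r, by rw [hr]; ring⟩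

section Padic

variable {p : ℕ} [Fact p.Prime] {n : ℕ}

theorem norm_le_zpow_neg_iff_dvd (x : ℤ_[p]) (N : ℕ) :
    ‖x‖ ≤ (p : ℝ) ^ (-(N : ℤ)) ↔ (p : ℤ_[p]) ^ N ∣ x := by
  rw [PadicInt.norm_le_pow_iff_mem_span_pow, Ideal.mem_span_singleton]

theorem toZMod_eq_zero_of_dvd {x : ℤ_[p]} (h : (p : ℤ_[p]) ∣ x) : PadicInt.toZMod x = 0 := by
  obtain ⟨y, rfl⟩ := h
  simp

/-! ### Stratification by the valuation of the gradient -/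

/-- The points `x` reducing into `S` with `p ^ M ∣ f x` at which the minimal valuation of the
partial derivatives of `f` is exactly `k`. -/
def gradStratum (f : MvPolynomial (Fin n) ℤ_[p]) (S : Set (Fin n → ZMod p)) (M k : ℕ) :
    Set (Fin n → ℤ_[p]) :=
  {x | (fun i => PadicInt.toZMod (x i)) ∈ S ∧ (p : ℤ_[p]) ^ M ∣ eval x f ∧
    (∀ i, (p : ℤ_[p]) ^ k ∣ eval x (pderiv i f)) ∧
    ∃ i, ¬ (p : ℤ_[p]) ^ (k + 1) ∣ eval x (pderiv i f)}

variable {f : MvPolynomial (Fin n) ℤ_[p]} {S : Set (Fin n → ZMod p)} {M k : ℕ}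

theorem add_smul_mem_gradStratum (hk : 2 * k + 1 ≤ M) {x : Fin n → ℤ_[p]}
    (hx : x ∈ gradStratum f S M k) (y : Fin n → ℤ_[p]) :
    x + (p : ℤ_[p]) ^ (M - k) • y ∈ gradStratum f S M k := by
  obtain ⟨h1, h2, h3, i, h4⟩ := hx
  have hd (j : Fin n) : (p : ℤ_[p]) ^ (k + 1) ∣
      eval (x + (p : ℤ_[p]) ^ (M - k) • y) (pderiv j f) - eval x (pderiv j f) :=
    (pow_dvd_pow _ (by omega)).trans (dvd_eval_add_smul_sub _ _ _ _)
  refine ⟨?_, ?_, fun j => ?_, i, fun h => h4 ?_⟩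
  · convert h1 using 2 with j
    have : PadicInt.toZMod ((p : ℤ_[p]) ^ (M - k) * y j) = 0 :=
      toZMod_eq_zero_of_dvd (Dvd.dvd.mul_right (dvd_pow_self _ (by omega)) _)
    rw [Pi.add_apply, Pi.smul_apply, smul_eq_mul, map_add, this, add_zero]
  · obtain ⟨r, hr⟩ := exists_eval_add_smul_eq f x y ((p : ℤ_[p]) ^ (M - k))
    rw [hr]
    refine dvd_add (dvd_add h2 ?_) (Dvd.dvd.mul_right ?_ _)
    · rw [show M = (M - k) + k by omega, pow_add, Nat.add_sub_cancel]
      exact mul_dvd_mul_left _ (Finset.dvd_sum fun j _ => Dvd.dvd.mul_right (h3 j) _)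
    · rw [← pow_mul]
      exact pow_dvd_pow _ (by omega)
  · exact (dvd_iff_dvd_of_dvd_sub ((pow_dvd_pow _ (Nat.le_succ k)).trans (hd j))).2 (h3 j)
  · exact (dvd_iff_dvd_of_dvd_sub (hd i)).1 h

theorem add_smul_mem_gradStratum_iff (hk : 2 * k + 1 ≤ M) (x y : Fin n → ℤ_[p]) :
    x + (p : ℤ_[p]) ^ (M - k) • y ∈ gradStratum f S M k ↔ x ∈ gradStratum f S M k := by
  refine ⟨fun h => ?_, fun h => add_smul_mem_gradStratum hk h y⟩
  simpa using add_smul_mem_gradStratum hk h (-y)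

theorem isOpen_gradStratum (hk : 2 * k + 1 ≤ M) : IsOpen (gradStratum f S M k) := by
  have hp : (0 : ℝ) < p := by exact_mod_cast (Fact.out : p.Prime).pos
  refine Metric.isOpen_iff.2 fun x hx => ⟨(p : ℝ) ^ (-((M - k : ℕ) : ℤ)), by positivity, ?_⟩
  intro z hz
  have hd (i : Fin n) : (p : ℤ_[p]) ^ (M - k) ∣ z i - x i := by
    rw [← norm_le_zpow_neg_iff_dvd, ← dist_eq_norm]
    exact (dist_le_pi_dist z x i).trans (Metric.mem_ball.1 hz).le
  choose y hy using hd
  have : z = x + (p : ℤ_[p]) ^ (M - k) • y := by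
    ext1 i
    simp [← hy]
  rw [this]
  exact add_smul_mem_gradStratum hk hx y

theorem disjoint_gradStratum_of_lt {k l : ℕ} (h : k < l) :
    Disjoint (gradStratum f S M k) (gradStratum f S M l) := by
  refine Set.disjoint_left.2 fun x hx hx' => ?_
  obtain ⟨i, hi⟩ := hx.2.2.2
  exact hi ((pow_dvd_pow _ h).trans (hx'.2.2.1 i))

/-- The complement of the gradient condition is the union of the strata with `2 * k < M`. -/
theorem biUnion_gradStratum (f : MvPolynomial (Fin n) ℤ_[p]) (S : Set (Fin n → ZMod p)) (M : ℕ) :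
    {x | (fun i => PadicInt.toZMod (x i)) ∈ S ∧ (p : ℤ_[p]) ^ M ∣ eval x f} \
      {x | ∀ i j, (p : ℤ_[p]) ^ M ∣ eval x (pderiv i f) * eval x (pderiv j f)}
    = ⋃ k ∈ (Finset.range M).filter (fun k => 2 * k + 1 ≤ M), gradStratum f S M k := by
  classical
  ext x
  simp only [Set.mem_sdiff, Set.mem_ofPred_eq, Set.mem_iUnion, Finset.mem_filter, Finset.mem_range,
    exists_prop, not_forall]
  constructor
  · rintro ⟨⟨h1, h2⟩, i, j, hij⟩
    have hex : ∃ k, ∃ i, ¬ (p : ℤ_[p]) ^ (k + 1) ∣ eval x (pderiv i f) :=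
      ⟨M, i, fun h => hij (Dvd.dvd.mul_right ((pow_dvd_pow _ (Nat.le_succ M)).trans h) _)⟩
    have hall : ∀ i, (p : ℤ_[p]) ^ Nat.find hex ∣ eval x (pderiv i f) := by
      intro i
      rcases hk : Nat.find hex with _ | k
      · simp
      · have := Nat.find_min hex (m := k) (by omega)
        push Not at this
        exact this i
    have hlt : 2 * Nat.find hex + 1 ≤ M := by
      by_contra! hlt
      refine hij ((pow_dvd_pow _ (?_ : M ≤ Nat.find hex + Nat.find hex)).trans ?_)
      · omega
      · rw [pow_add]
        exact mul_dvd_mul (hall i) (hall j)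
    exact ⟨Nat.find hex, ⟨by omega, hlt⟩, h1, h2, hall, Nat.find_spec hex⟩
  · rintro ⟨k, ⟨-, hk⟩, h1, h2, h3, i, h4⟩
    refine ⟨⟨h1, h2⟩, i, i, fun h => h4 ?_⟩
    obtain ⟨u, hu⟩ := h3 i
    have hp0 : (p : ℤ_[p]) ^ (2 * k) ≠ 0 := pow_ne_zero _ PadicInt.prime_p.ne_zero
    have hdvd : (p : ℤ_[p]) ^ (2 * k) * p ∣ (p : ℤ_[p]) ^ (2 * k) * u ^ 2 := by
      rw [← pow_succ]
      convert (pow_dvd_pow _ hk).trans h using 1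
      rw [hu]
      ring
    have := PadicInt.prime_p.dvd_of_dvd_pow ((mul_dvd_mul_iff_left hp0).1 hdvd)
    rw [hu, pow_succ]
    exact mul_dvd_mul_left _ this

/-! ### Character sums -/

variable {φ : AddChar ℤ_[p] ℂ}

/-- A character of `ℤ_p` trivial on `p ^ (M + 1) ℤ_p` but not on `p ^ M ℤ_p` is nontrivial at
every element of valuation exactly `M`. -/
theorem addChar_ne_one_of_not_dvd (hφ0 : ∀ a, φ (p ^ (M + 1) * a) = 1)
    (hφ1 : ∃ w, φ (p ^ M * w) ≠ 1) {u : ℤ_[p]} (hu : ¬ (p : ℤ_[p]) ∣ u) :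
    φ (p ^ M * u) ≠ 1 := by
  intro h
  obtain ⟨w, hw⟩ := hφ1
  have hunit : IsUnit u := by
    by_contra hnu
    apply hu
    rw [← Ideal.mem_span_singleton, ← PadicInt.maximalIdeal_eq_span_p]
    exact hnu
  obtain ⟨v, rfl⟩ := hunit
  -- `w / u` is a natural number `t` modulo `p`, and `φ (p ^ M * u * t) = φ (p ^ M * u) ^ t`.
  have hs := PadicInt.sub_zmodRepr_mem ((↑v⁻¹ : ℤ_[p]) * w)
  rw [PadicInt.maximalIdeal_eq_span_p, Ideal.mem_span_singleton] at hs
  obtain ⟨s, hs⟩ := hs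
  set t := PadicInt.zmodRepr ((↑v⁻¹ : ℤ_[p]) * w)
  have hw' : (p : ℤ_[p]) ^ M * w = t • ((p : ℤ_[p]) ^ M * v) + p ^ (M + 1) * (v * s) := by
    have : w = v * (t + p * s) := by
      rw [← hs]
      simp
    rw [this, nsmul_eq_mul]
    ring
  apply hw
  rw [hw', AddChar.map_add_eq_mul, AddChar.map_nsmul_eq_pow, h, hφ0]
  simp

/-- Translating by `p ^ (M - k) y` multiplies `φ (f x)` by a product of powers of values of `φ`. -/
theorem addChar_eval_add_smul (hφ0 : ∀ a, φ (p ^ (M + 1) * a) = 1) (hk : 2 * k + 1 ≤ M)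
    (x : Fin n → ℤ_[p]) (y : Fin n → ℕ) :
    φ (eval (x + (p : ℤ_[p]) ^ (M - k) • fun i => (y i : ℤ_[p])) f)
      = φ (eval x f) * ∏ i, φ (p ^ (M - k) * eval x (pderiv i f)) ^ y i := by
  obtain ⟨r, hr⟩ := exists_eval_add_smul_eq f x (fun i => (y i : ℤ_[p])) ((p : ℤ_[p]) ^ (M - k))
  have h2 : φ (((p : ℤ_[p]) ^ (M - k)) ^ 2 * r) = 1 := by
    rw [← pow_mul, show (M - k) * 2 = (M + 1) + ((M - k) * 2 - (M + 1)) by omega, pow_add,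
      mul_assoc, hφ0]
  rw [hr, AddChar.map_add_eq_mul, AddChar.map_add_eq_mul, h2, mul_one, Finset.mul_sum]
  congr 1
  refine (map_prod φ.toMonoidHom (fun i => Multiplicative.ofAdd
    ((p : ℤ_[p]) ^ (M - k) * (eval x (pderiv i f) * y i))) Finset.univ).trans ?_
  simp only [AddChar.toMonoidHom_apply, toAdd_ofAdd]
  refine Finset.prod_congr rfl fun i _ => ?_
  rw [← AddChar.map_nsmul_eq_pow, nsmul_eq_mul]
  congr 1
  ring

theorem sum_prod_addChar_eq_zero (hφ0 : ∀ a, φ (p ^ (M + 1) * a) = 1)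
    (hφ1 : ∃ w, φ (p ^ M * w) ≠ 1) (hk : 2 * k + 1 ≤ M) {x : Fin n → ℤ_[p]}
    (hx : x ∈ gradStratum f S M k) :
    ∑ y ∈ Fintype.piFinset (fun _ : Fin n => Finset.range p),
      ∏ i, φ (p ^ (M - k) * eval x (pderiv i f)) ^ y i = 0 := by
  obtain ⟨-, -, h3, i, h4⟩ := hx
  rw [← Finset.prod_univ_sum]
  refine Finset.prod_eq_zero (Finset.mem_univ i) ?_
  obtain ⟨u, hu⟩ := h3 i
  have hpu : ¬ (p : ℤ_[p]) ∣ u := fun h => h4 <| by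
    rw [hu, pow_succ]
    exact mul_dvd_mul_left _ h
  have hMk : (p : ℤ_[p]) ^ (M - k) * (p ^ k * u) = p ^ M * u := by
    rw [← mul_assoc, ← pow_add, Nat.sub_add_cancel (by omega)]
  have hroot : φ (p ^ M * u) ^ p = 1 := by
    rw [← AddChar.map_nsmul_eq_pow, nsmul_eq_mul, ← mul_assoc, ← pow_succ', hφ0]
  rw [hu, hMk, geom_sum_eq (addChar_ne_one_of_not_dvd hφ0 hφ1 hpu), hroot]
  simp

/-! ### Vanishing of the integral over a stratum -/

variable [MeasurableSpace ℤ_[p]] [BorelSpace ℤ_[p]]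
  {μ : Measure (Fin n → ℤ_[p])} [μ.IsAddHaarMeasure]

theorem integrable_addChar_eval (hφ : Continuous φ) (f : MvPolynomial (Fin n) ℤ_[p]) :
    Integrable (fun x => φ (eval x f)) μ :=
  (hφ.comp f.continuous_eval).integrable_of_hasCompactSupport (HasCompactSupport.of_compactSpace _)

theorem setIntegral_gradStratum_eq_zero (hφ : Continuous φ)
    (hφ0 : ∀ a, φ (p ^ (M + 1) * a) = 1) (hφ1 : ∃ w, φ (p ^ M * w) ≠ 1) (hk : 2 * k + 1 ≤ M) :
    ∫ x in gradStratum f S M k, φ (eval x f) ∂μ = 0 := by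
  classical
  have hmeas : MeasurableSet (gradStratum f S M k) := (isOpen_gradStratum hk).measurableSet
  set Y := Fintype.piFinset (fun _ : Fin n => Finset.range p) with hY
  have htrans (y : Fin n → ℕ) : ∫ x in gradStratum f S M k, φ (eval x f) ∂μ
      = ∫ x in gradStratum f S M k,
          φ (eval (x + (p : ℤ_[p]) ^ (M - k) • fun i => (y i : ℤ_[p])) f) ∂μ := by
    rw [← integral_indicator hmeas, ← integral_indicator hmeas,
      ← integral_add_right_eq_self _ ((p : ℤ_[p]) ^ (M - k) • fun i => (y i : ℤ_[p]))]
    congr 1 with x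
    simp only [Set.indicator_apply, add_smul_mem_gradStratum_iff hk]
  have hint (y : Fin n → ℕ) : IntegrableOn
      (fun x => φ (eval (x + (p : ℤ_[p]) ^ (M - k) • fun i => (y i : ℤ_[p])) f))
      (gradStratum f S M k) μ :=
    ((integrable_addChar_eval hφ f).comp_add_right _).integrableOn
  have hsum : (Y.card : ℂ) * ∫ x in gradStratum f S M k, φ (eval x f) ∂μ = 0 := by
    rw [← nsmul_eq_mul, ← Finset.sum_const, Finset.sum_congr rfl fun y _ => htrans y,
      ← integral_finsetSum _ fun y _ => hint y]
    refine setIntegral_eq_zero_of_forall_eq_zero fun x hx => ?_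
    simp only [addChar_eval_add_smul hφ0 hk, ← Finset.mul_sum]
    rw [hY, sum_prod_addChar_eq_zero hφ0 hφ1 hk hx, mul_zero]
  refine (mul_eq_zero.1 hsum).resolve_left ?_
  simp [hY, (Fact.out : p.Prime).ne_zero]

end Padic

/-- Let `p` be a prime, `n ≥ 1` and `m ≥ 2` integers, and let `ψ` be an additive
character of `ℚ_p` of conductor `m` (trivial on `p^m ℤ_p`, nontrivial on `p^(m-1) ℤ_p`).
Let `f ∈ ℤ_p[x₁,…,xₙ]` and `S ⊆ 𝔽_pⁿ`.  With `μ` the Haar measure on `ℤ_pⁿ` normalized so that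
`ℤ_pⁿ` has measure `1`, the integral of `ψ(f(x))` over
`{x ∈ ℤ_pⁿ : x̄ ∈ S, v_p(f(x)) ≥ m-1}` equals the integral over
`{x ∈ ℤ_pⁿ : x̄ ∈ S, v_p(f(x)) ≥ m-1, v_p(∂ᵢf(x)·∂ⱼf(x)) ≥ m-1 for all i,j}`.
Valuation conditions `v_p(a) ≥ m-1` are expressed via the norm as `‖a‖ ≤ p^{-(m-1)}`. -/
theorem stmt_0 {p : ℕ} [Fact p.Prime] (n m : ℕ) (hn : 1 ≤ n) (hm : 2 ≤ m)
    (ψ : ℚ_[p] → ℂ) (hψ_cont : Continuous ψ)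
    (hψ_add : ∀ a b : ℚ_[p], ψ (a + b) = ψ a * ψ b)
    (hψ_norm : ∀ a : ℚ_[p], ‖ψ a‖ = 1)
    (hψ_triv : ∀ z : ℚ_[p], ‖z‖ ≤ (p : ℝ) ^ (-(m : ℤ)) → ψ z = 1)
    (hψ_nontriv : ∃ z : ℚ_[p], ‖z‖ ≤ (p : ℝ) ^ (-((m : ℤ) - 1)) ∧ ψ z ≠ 1)
    (f : MvPolynomial (Fin n) ℤ_[p]) (S : Set (Fin n → ZMod p))
    [MeasurableSpace ℤ_[p]] [BorelSpace ℤ_[p]]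
    (μ : Measure (Fin n → ℤ_[p])) [μ.IsAddHaarMeasure] (hμ : μ Set.univ = 1) :
    (∫ x in {x : Fin n → ℤ_[p] | (fun i => PadicInt.toZMod (x i)) ∈ S ∧
        ‖eval x f‖ ≤ (p : ℝ) ^ (-((m : ℤ) - 1))},
      ψ ((eval x f : ℤ_[p]) : ℚ_[p]) ∂μ)
    = ∫ x in {x : Fin n → ℤ_[p] | (fun i => PadicInt.toZMod (x i)) ∈ S ∧
        ‖eval x f‖ ≤ (p : ℝ) ^ (-((m : ℤ) - 1)) ∧
        ∀ i j : Fin n, ‖eval x (pderiv i f) * eval x (pderiv j f)‖ ≤ (p : ℝ) ^ (-((m : ℤ) - 1))},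
      ψ ((eval x f : ℤ_[p]) : ℚ_[p]) ∂μ := by
  classical
  obtain ⟨M, rfl⟩ : ∃ M, m = M + 1 := ⟨m - 1, by omega⟩
  have hM : (-(((M + 1 : ℕ) : ℤ) - 1)) = -(M : ℤ) := by push_cast; ring
  have hp1 : (1 : ℝ) < p := by exact_mod_cast (Fact.out : p.Prime).one_lt
  rw [hM] at hψ_nontriv ⊢
  simp only [norm_le_zpow_neg_iff_dvd]
  let φ : AddChar ℤ_[p] ℂ :=
    { toFun := fun a => ψ a
      map_zero_eq_one' := hψ_triv _ (by simp; positivity)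
      map_add_eq_mul' := fun a b => by rw [PadicInt.coe_add, hψ_add] }
  have hφ : Continuous φ := hψ_cont.comp continuous_subtype_val
  have hφ0 : ∀ a, φ (p ^ (M + 1) * a) = 1 := fun a => hψ_triv _ <| by
    rw [PadicInt.padic_norm_e_of_padicInt, norm_le_zpow_neg_iff_dvd]
    exact dvd_mul_right _ _
  have hφ1 : ∃ w, φ (p ^ M * w) ≠ 1 := by
    obtain ⟨z, hz, hz1⟩ := hψ_nontriv
    have hz_int : ‖z‖ ≤ 1 := hz.trans (zpow_le_one_of_nonpos₀ hp1.le (by simp))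
    obtain ⟨z, rfl⟩ : ∃ a : ℤ_[p], (a : ℚ_[p]) = z := ⟨⟨z, hz_int⟩, rfl⟩
    rw [PadicInt.padic_norm_e_of_padicInt, norm_le_zpow_neg_iff_dvd] at hz
    obtain ⟨w, rfl⟩ := hz
    exact ⟨w, hz1⟩
  change ∫ x in _, φ (eval x f) ∂μ = ∫ x in _, φ (eval x f) ∂μ
  have hclosed : IsClosed {x : Fin n → ℤ_[p] |
      ∀ i j, (p : ℤ_[p]) ^ M ∣ eval x (pderiv i f) * eval x (pderiv j f)} := by
    simp only [← norm_le_zpow_neg_iff_dvd, Set.ofPred_forall]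
    exact isClosed_iInter fun i => isClosed_iInter fun j => isClosed_le
      (((pderiv i f).continuous_eval.mul (pderiv j f).continuous_eval).norm) continuous_const
  rw [← integral_inter_add_sdiff hclosed.measurableSet
    (integrable_addChar_eval hφ f).integrableOn, biUnion_gradStratum,
    integral_biUnion_finset _
      (fun k hk => (isOpen_gradStratum (Finset.mem_filter.1 hk).2).measurableSet)
      (fun k _ l _ hkl => hkl.lt_or_gt.elim disjoint_gradStratum_of_lt
        fun h => (disjoint_gradStratum_of_lt h).symm)
      (fun k _ => (integrable_addChar_eval hφ f).integrableOn),
    Finset.sum_eq_zero fun k hk =>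
      setIntegral_gradStratum_eq_zero hφ hφ0 hφ1 (Finset.mem_filter.1 hk).2, add_zero]
  simp only [Set.inter_def, Set.mem_ofPred_eq, and_assoc]
end

section
/- Let p be a prime, n ≥ 1 and m ≥ 2 integers, and let ψ be an additive character of ℚ_p of conductor m. Let f ∈ ℤ_p[x₁,…,xₙ] and let S be any subset of 𝔽_pⁿ. Then ∫_{{x ∈ ℤ_pⁿ : x̄ ∈ S}} ψ(f(x)) dx = ∫_{{x ∈ ℤ_pⁿ : x̄ ∈ S and v_p(∂ᵢf(x)·∂ⱼf(x)) ≥ m−1 for all 1 ≤ i,j ≤ n}} ψ(f(x)) dx. -/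
/-!
If `x` violates the condition on the right-hand side, then `2 r ≤ m - 2`, where `p ^ r` is the exact
power of `p` dividing the gradient of `f` at `x`.  Group these `x` into strata according to `r` and
the gradient modulo `p ^ (r + 1)`.  A stratum is stable under translation by `p ^ (r + 1) ℤ_pⁿ`.
Let `i` be such that `∂ᵢf` is nonzero modulo `p ^ (r + 1)` on the stratum, and let `s` be divisible
by `p ^ (m - 1 - r)`.  The Taylor expansion
`f (x + s eᵢ) = f x + s ∂ᵢf x + s² q` then shows that modulo `p ^ m` the value `f (x + s eᵢ) - f x`
is constant on the stratum, because `2 (m - 1 - r) ≥ m`; note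
`m - 1 - r ≥ r + 1`, so this translation preserves the stratum; moreover `s` can be chosen such that this
constant is any prescribed multiple of `p ^ (m - 1)`.  As `ψ` is nontrivial on `p ^ (m - 1) ℤ_p`, the
integral of `ψ ∘ f` over the stratum equals itself times some `ζ ≠ 1`, so it vanishes.  The strata
form a countable measurable partition of the set of violating points.
-/

open MeasureTheory MvPolynomial

section Auxiliary

variable {p : ℕ} [Fact p.Prime] {n : ℕ}

/-- First order Taylor expansion of a polynomial along a coordinate direction. -/
lemma exists_eval_add_single {R σ : Type*} [CommRing R] [DecidableEq σ] (g : MvPolynomial σ R)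
    (x : σ → R) (i : σ) (s : R) :
    ∃ q, eval (x + Pi.single i s) g = eval x g + s * eval x (pderiv i g) + s ^ 2 * q := by
  induction g using MvPolynomial.induction_on with
  | C a => exact ⟨0, by simp⟩
  | add g h hg hh =>
    obtain ⟨q, hq⟩ := hg
    obtain ⟨q', hq'⟩ := hh
    exact ⟨q + q', by simp only [map_add, hq, hq']; ring⟩
  | mul_X g j hg =>
    obtain ⟨q, hq⟩ := hg
    by_cases hij : j = i
    · subst hij
      refine ⟨eval x (pderiv j g) + q * (x j + s), ?_⟩
      simp only [map_mul, hq, pderiv_mul, map_add, eval_X, pderiv_X_self, Pi.add_apply,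
        Pi.single_eq_same, map_one]
      ring
    · refine ⟨q * x j, ?_⟩
      simp only [map_mul, hq, pderiv_mul, map_add, eval_X, pderiv_X_of_ne hij, Pi.add_apply,
        Pi.single_eq_of_ne hij, map_zero]
      ring

lemma dvd_eval_sub_eval {R σ : Type*} [CommRing R] (g : MvPolynomial σ R) {x y : σ → R} {c : R}
    (h : ∀ i, c ∣ y i - x i) : c ∣ eval y g - eval x g := by
  simp only [← Ideal.mem_span_singleton, ← Ideal.Quotient.eq] at h ⊢
  simp only [eval, coe_eval₂Hom]
  rw [eval₂_comp_left, eval₂_comp_left]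
  congr 1
  exact funext h

lemma norm_le_zpow_iff_dvd (a : ℤ_[p]) (k : ℕ) :
    ‖a‖ ≤ (p : ℝ) ^ (-(k : ℤ)) ↔ (p : ℤ_[p]) ^ k ∣ a := by
  rw [PadicInt.norm_le_pow_iff_mem_span_pow, Ideal.mem_span_singleton]

lemma toZModPow_eq_iff_dvd (k : ℕ) (a b : ℤ_[p]) :
    PadicInt.toZModPow k a = PadicInt.toZModPow k b ↔ (p : ℤ_[p]) ^ k ∣ a - b := by
  rw [← Ideal.mem_span_singleton, ← PadicInt.ker_toZModPow, RingHom.mem_ker, map_sub, sub_eq_zero]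

lemma toZMod_eq_of_dvd {a b : ℤ_[p]} (h : (p : ℤ_[p]) ∣ a - b) :
    PadicInt.toZMod a = PadicInt.toZMod b := by
  rw [← sub_eq_zero, ← map_sub, ← RingHom.mem_ker, PadicInt.ker_toZMod,
    PadicInt.maximalIdeal_eq_span_p, Ideal.mem_span_singleton]
  exact h

lemma isOpen_of_congr {A : Set (Fin n → ℤ_[p])} (k : ℕ)
    (h : ∀ x y, (∀ i, (p : ℤ_[p]) ^ k ∣ y i - x i) → x ∈ A → y ∈ A) : IsOpen A := by
  rw [Metric.isOpen_iff]
  intro x hx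
  have hp : (0 : ℝ) < p := by exact_mod_cast (Fact.out : p.Prime).pos
  refine ⟨(p : ℝ) ^ (-(k : ℤ)), by positivity, fun y hy => h x y (fun i => ?_) hx⟩
  rw [← norm_le_zpow_iff_dvd, ← dist_eq_norm]
  exact (dist_le_pi_dist y x i).trans (Metric.mem_ball.1 hy).le

/-- The points with residue in `S` at which the gradient of `f` is divisible by exactly `p ^ r`, and
its reduction modulo `p ^ (r + 1)` is `d`. -/
def stratum (f : MvPolynomial (Fin n) ℤ_[p]) (S : Set (Fin n → ZMod p)) (r : ℕ)
    (d : Fin n → ZMod (p ^ (r + 1))) : Set (Fin n → ℤ_[p]) :=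
  {x | (fun i => PadicInt.toZMod (x i)) ∈ S ∧ (∀ j, (p : ℤ_[p]) ^ r ∣ eval x (pderiv j f)) ∧
    (fun j => PadicInt.toZModPow (r + 1) (eval x (pderiv j f))) = d ∧ d ≠ 0}

lemma stratum_congr {f : MvPolynomial (Fin n) ℤ_[p]} {S : Set (Fin n → ZMod p)} {r : ℕ}
    {d : Fin n → ZMod (p ^ (r + 1))} {x y : Fin n → ℤ_[p]}
    (h : ∀ i, (p : ℤ_[p]) ^ (r + 1) ∣ y i - x i) (hx : x ∈ stratum f S r d) :
    y ∈ stratum f S r d := by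
  obtain ⟨h1, h2, h3, h4⟩ := hx
  have hg : ∀ j, (p : ℤ_[p]) ^ (r + 1) ∣ eval y (pderiv j f) - eval x (pderiv j f) :=
    fun j => dvd_eval_sub_eval _ h
  refine ⟨?_, fun j => ?_, ?_, h4⟩
  · convert h1 using 2 with i
    exact toZMod_eq_of_dvd ((dvd_pow_self _ (Nat.succ_ne_zero r)).trans (h i))
  · exact (dvd_iff_dvd_of_dvd_sub ((pow_dvd_pow _ (Nat.le_succ r)).trans (hg j))).2 (h2 j)
  · rw [← h3]
    funext j
    exact (toZModPow_eq_iff_dvd _ _ _).2 (hg j)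

lemma isOpen_stratum (f : MvPolynomial (Fin n) ℤ_[p]) (S : Set (Fin n → ZMod p)) (r : ℕ)
    (d : Fin n → ZMod (p ^ (r + 1))) : IsOpen (stratum f S r d) :=
  isOpen_of_congr (r + 1) fun _ _ h hx => stratum_congr h hx

lemma stratum_exists_not_dvd {f : MvPolynomial (Fin n) ℤ_[p]} {S : Set (Fin n → ZMod p)} {r : ℕ}
    {d : Fin n → ZMod (p ^ (r + 1))} {x : Fin n → ℤ_[p]} (hx : x ∈ stratum f S r d) :
    ∃ i, ¬ (p : ℤ_[p]) ^ (r + 1) ∣ eval x (pderiv i f) := by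
  obtain ⟨-, -, h3, h4⟩ := hx
  by_contra! hcon
  refine h4 (h3 ▸ funext fun j => ?_)
  rw [Pi.zero_apply, ← map_zero (PadicInt.toZModPow (r + 1)), toZModPow_eq_iff_dvd, sub_zero]
  exact hcon j

lemma stratum_index_unique {f : MvPolynomial (Fin n) ℤ_[p]} {S : Set (Fin n → ZMod p)}
    {r r' : ℕ} {d : Fin n → ZMod (p ^ (r + 1))} {d' : Fin n → ZMod (p ^ (r' + 1))}
    {x : Fin n → ℤ_[p]} (hx : x ∈ stratum f S r d) (hx' : x ∈ stratum f S r' d') : r' ≤ r := by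
  obtain ⟨i, hi⟩ := stratum_exists_not_dvd hx
  by_contra! hlt
  exact hi ((pow_dvd_pow _ hlt).trans (hx'.2.1 i))

lemma stratum_disjoint (f : MvPolynomial (Fin n) ℤ_[p]) (S : Set (Fin n → ZMod p)) :
    Pairwise (Function.onFun Disjoint
      fun l : Σ r : ℕ, Fin n → ZMod (p ^ (r + 1)) => stratum f S l.1 l.2) := by
  rintro ⟨r, d⟩ ⟨r', d'⟩ hne
  refine Set.disjoint_left.2 fun x hx hx' => hne ?_
  obtain rfl : r = r' := le_antisymm (stratum_index_unique hx' hx) (stratum_index_unique hx hx')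
  obtain rfl : d = d' := hx.2.2.1.symm.trans hx'.2.2.1
  rfl

/-- The condition on the products of partial derivatives fails exactly on the strata with
`2 r + 2 ≤ m`. -/
lemma not_forall_dvd_iff {f : MvPolynomial (Fin n) ℤ_[p]} {S : Set (Fin n → ZMod p)} {m : ℕ}
    (hm : 2 ≤ m) {x : Fin n → ℤ_[p]} (hxS : (fun i => PadicInt.toZMod (x i)) ∈ S) :
    (¬ ∀ i j, (p : ℤ_[p]) ^ (m - 1) ∣ eval x (pderiv i f) * eval x (pderiv j f)) ↔
      ∃ r d, 2 * r + 2 ≤ m ∧ x ∈ stratum f S r d := by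
  classical
  constructor
  · intro h
    have hex : ∃ r, ¬ ∀ j, (p : ℤ_[p]) ^ (r + 1) ∣ eval x (pderiv j f) := by
      refine ⟨m - 1, fun hall => h fun i j => ?_⟩
      exact ((pow_dvd_pow _ (Nat.le_succ _)).trans (hall i)).mul_right _
    obtain ⟨r, hnot, hdvd⟩ : ∃ r, (¬ ∀ j, (p : ℤ_[p]) ^ (r + 1) ∣ eval x (pderiv j f)) ∧
        ∀ j, (p : ℤ_[p]) ^ r ∣ eval x (pderiv j f) := by
      refine ⟨Nat.find hex, Nat.find_spec hex, ?_⟩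
      rcases hr : Nat.find hex with _ | r
      · simp
      · exact not_not.1 (Nat.find_min hex (hr ▸ Nat.lt_succ_self r))
    refine ⟨r, _, ?_, hxS, hdvd, rfl, fun h0 => hnot fun j => ?_⟩
    · by_contra! hlt
      refine h fun i j => (pow_dvd_pow _ (show m - 1 ≤ r + r by omega)).trans ?_
      rw [pow_add]
      exact mul_dvd_mul (hdvd i) (hdvd j)
    · have := congrFun h0 j
      rwa [Pi.zero_apply, ← map_zero (PadicInt.toZModPow _), toZModPow_eq_iff_dvd, sub_zero] at this
  · rintro ⟨r, d, hr, hx⟩ hall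
    obtain ⟨i, hi⟩ := stratum_exists_not_dvd hx
    obtain ⟨u, hu⟩ := hx.2.1 i
    have hp0 : (p : ℤ_[p]) ≠ 0 := PadicInt.prime_p.ne_zero
    have h1 : (p : ℤ_[p]) ^ (2 * r + 1) ∣ eval x (pderiv i f) * eval x (pderiv i f) :=
      (pow_dvd_pow _ (by omega)).trans (hall i i)
    rw [hu, show (p : ℤ_[p]) ^ r * u * (p ^ r * u) = p ^ (2 * r) * (u * u) by ring, pow_succ,
      mul_dvd_mul_iff_left (pow_ne_zero _ hp0)] at h1
    have h2 : (p : ℤ_[p]) ∣ u := by rcases PadicInt.prime_p.dvd_or_dvd h1 with h | h <;> exact h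
    exact hi (by rw [hu, pow_succ]; exact mul_dvd_mul_left _ h2)

/-- On a stratum with `2 r + 2 ≤ m`, some translation preserving it shifts `f` by any prescribed
multiple `z` of `p ^ (m - 1)`, up to `p ^ m`. -/
lemma exists_translation {f : MvPolynomial (Fin n) ℤ_[p]} {S : Set (Fin n → ZMod p)} {m r : ℕ}
    (hr : 2 * r + 2 ≤ m) {d : Fin n → ZMod (p ^ (r + 1))} {x₀ : Fin n → ℤ_[p]}
    (hx₀ : x₀ ∈ stratum f S r d) {z : ℤ_[p]} (hz : (p : ℤ_[p]) ^ (m - 1) ∣ z) :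
    ∃ t : Fin n → ℤ_[p], (∀ i, (p : ℤ_[p]) ^ (r + 1) ∣ t i) ∧
      ∀ x ∈ stratum f S r d, (p : ℤ_[p]) ^ m ∣ eval (x + t) f - (eval x f + z) := by
  obtain ⟨i, hi⟩ := stratum_exists_not_dvd hx₀
  obtain ⟨u, hu⟩ := hx₀.2.1 i
  obtain ⟨w, rfl⟩ := hz
  have hunit : IsUnit u := by
    rw [PadicInt.isUnit_iff]
    refine le_antisymm (PadicInt.norm_le_one u) (not_lt.1 fun hlt => hi ?_)
    rw [hu, pow_succ]
    exact mul_dvd_mul_left _ ((PadicInt.norm_lt_one_iff_dvd u).1 hlt)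
  obtain ⟨v, hv⟩ := hunit.exists_right_inv
  obtain ⟨k, rfl⟩ : ∃ k, m = 2 * r + 2 + k := ⟨m - (2 * r + 2), by omega⟩
  set s : ℤ_[p] := p ^ (r + 1 + k) * (w * v) with hs
  refine ⟨Pi.single i s, fun j => ?_, fun x hx => ?_⟩
  · by_cases hj : j = i
    · subst hj
      rw [Pi.single_eq_same, hs]
      exact (pow_dvd_pow _ (Nat.le_add_right _ k)).mul_right _
    · simp [Pi.single_eq_of_ne hj]
  · obtain ⟨q, hq⟩ := exists_eval_add_single f x i s
    obtain ⟨e, he⟩ : (p : ℤ_[p]) ^ (r + 1) ∣ eval x (pderiv i f) - eval x₀ (pderiv i f) :=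
      (toZModPow_eq_iff_dvd _ _ _).1 (congrFun (hx.2.2.1.trans hx₀.2.2.1.symm) i)
    rw [hu, sub_eq_iff_eq_add] at he
    rw [hq, he, hs, show 2 * r + 2 + k - 1 = r + (r + 1 + k) by omega]
    refine ⟨w * v * e + p ^ k * (w * v) ^ 2 * q, ?_⟩
    linear_combination (p : ℤ_[p]) ^ (r + (r + 1 + k)) * w * hv

end Auxiliary

/-- Let `p` be a prime, `n ≥ 1` and `m ≥ 2` integers, and let `ψ` be an additive
character of `ℚ_p` of conductor `m`.  Let `f ∈ ℤ_p[x₁,…,xₙ]` and `S ⊆ 𝔽_pⁿ`.  Then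
`∫_{x̄ ∈ S} ψ(f(x)) dx = ∫_{x̄ ∈ S, v_p(∂ᵢf(x)·∂ⱼf(x)) ≥ m-1 ∀ i,j} ψ(f(x)) dx`,
where `dx` is the Haar measure on `ℤ_pⁿ` normalized so that `ℤ_pⁿ` has measure `1`.
Valuation conditions `v_p(a) ≥ m-1` are expressed via the norm as `‖a‖ ≤ p^{-(m-1)}`. -/
theorem stmt_1 {p : ℕ} [Fact p.Prime] (n m : ℕ) (hn : 1 ≤ n) (hm : 2 ≤ m)
    (ψ : ℚ_[p] → ℂ) (hψ_cont : Continuous ψ)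
    (hψ_add : ∀ a b : ℚ_[p], ψ (a + b) = ψ a * ψ b)
    (hψ_norm : ∀ a : ℚ_[p], ‖ψ a‖ = 1)
    (hψ_triv : ∀ z : ℚ_[p], ‖z‖ ≤ (p : ℝ) ^ (-(m : ℤ)) → ψ z = 1)
    (hψ_nontriv : ∃ z : ℚ_[p], ‖z‖ ≤ (p : ℝ) ^ (-((m : ℤ) - 1)) ∧ ψ z ≠ 1)
    (f : MvPolynomial (Fin n) ℤ_[p]) (S : Set (Fin n → ZMod p))
    [MeasurableSpace ℤ_[p]] [BorelSpace ℤ_[p]]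
    (μ : Measure (Fin n → ℤ_[p])) [μ.IsAddHaarMeasure] (hμ : μ Set.univ = 1) :
    (∫ x in {x : Fin n → ℤ_[p] | (fun i => PadicInt.toZMod (x i)) ∈ S},
      ψ ((eval x f : ℤ_[p]) : ℚ_[p]) ∂μ)
    = ∫ x in {x : Fin n → ℤ_[p] | (fun i => PadicInt.toZMod (x i)) ∈ S ∧
        ∀ i j : Fin n, ‖eval x (pderiv i f) * eval x (pderiv j f)‖ ≤ (p : ℝ) ^ (-((m : ℤ) - 1))},
      ψ ((eval x f : ℤ_[p]) : ℚ_[p]) ∂μ := by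
  have hp : (1 : ℝ) < p := by exact_mod_cast (Fact.out : p.Prime).one_lt
  have hm1 : -((m : ℤ) - 1) = -((m - 1 : ℕ) : ℤ) := by omega
  simp only [hm1, norm_le_zpow_iff_dvd] at hψ_nontriv ⊢
  set g : (Fin n → ℤ_[p]) → ℂ := fun x => ψ ((eval x f : ℤ_[p]) : ℚ_[p]) with hg
  have hg_cont : Continuous g :=
    hψ_cont.comp (continuous_subtype_val.comp (MvPolynomial.continuous_eval f))
  have : IsProbabilityMeasure μ := ⟨hμ⟩
  have hg_int : Integrable g μ :=
    Integrable.of_bound hg_cont.aestronglyMeasurable 1 (.of_forall fun x => (hψ_norm _).le)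
  have hψ_congr : ∀ a b : ℤ_[p], (p : ℤ_[p]) ^ m ∣ a - b → ψ a = ψ b := by
    intro a b hab
    have h1 : ψ ((a - b : ℤ_[p]) : ℚ_[p]) = 1 := by
      refine hψ_triv _ ?_
      rw [← PadicInt.norm_def]
      exact (norm_le_zpow_iff_dvd _ _).2 hab
    calc ψ a = ψ (((a - b : ℤ_[p]) : ℚ_[p]) + b) := by congr 1; push_cast; ring
      _ = ψ b := by rw [hψ_add, h1, one_mul]
  obtain ⟨z, hz, hψz⟩ : ∃ z : ℤ_[p], (p : ℤ_[p]) ^ (m - 1) ∣ z ∧ ψ z ≠ 1 := by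
    obtain ⟨z, hz, hψz⟩ := hψ_nontriv
    have hz1 : ‖z‖ ≤ 1 := hz.trans (zpow_le_one_of_nonpos₀ hp.le (by omega))
    exact ⟨⟨z, hz1⟩, (norm_le_zpow_iff_dvd _ _).1 hz, hψz⟩
  have hzero : ∀ r (d : Fin n → ZMod (p ^ (r + 1))), 2 * r + 2 ≤ m →
      ∫ x in stratum f S r d, g x ∂μ = 0 := by
    intro r d hr
    rcases (stratum f S r d).eq_empty_or_nonempty with he | ⟨x₀, hx₀⟩
    · simp [he]
    obtain ⟨t, ht, htf⟩ := exists_translation hr hx₀ hz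
    have hmem : ∀ x, x + t ∈ stratum f S r d ↔ x ∈ stratum f S r d := fun x =>
      ⟨stratum_congr fun i => by simpa using ht i, stratum_congr fun i => by simpa using ht i⟩
    have hmeas := (isOpen_stratum f S r d).measurableSet
    have hshift : ∀ x, (stratum f S r d).indicator g (x + t) =
        ψ z * (stratum f S r d).indicator g x := by
      intro x
      by_cases hx : x ∈ stratum f S r d
      · rw [Set.indicator_of_mem hx, Set.indicator_of_mem ((hmem x).2 hx), hg]
        simp only
        rw [hψ_congr _ _ (htf x hx), PadicInt.coe_add, hψ_add, mul_comm]
      · rw [Set.indicator_of_notMem hx, Set.indicator_of_notMem (mt (hmem x).1 hx), mul_zero]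
    rw [← integral_indicator hmeas]
    have hI := integral_add_right_eq_self (μ := μ) ((stratum f S r d).indicator g) t
    simp only [hshift, integral_const_mul] at hI
    by_contra hne
    exact hψz (mul_right_cancel₀ hne (hI.trans (one_mul _).symm))
  set G : Set (Fin n → ℤ_[p]) := {x | (fun i => PadicInt.toZMod (x i)) ∈ S ∧
    ∀ i j, (p : ℤ_[p]) ^ (m - 1) ∣ eval x (pderiv i f) * eval x (pderiv j f)} with hG
  set T : Set (Fin n → ℤ_[p]) := {x | (fun i => PadicInt.toZMod (x i)) ∈ S} with hT
  have hS_congr : ∀ x y : Fin n → ℤ_[p], (∀ i, (p : ℤ_[p]) ∣ y i - x i) → x ∈ T → y ∈ T := by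
    intro x y h hx
    change (fun i => PadicInt.toZMod (x i)) ∈ S at hx
    change (fun i => PadicInt.toZMod (y i)) ∈ S
    convert hx using 2 with i
    exact toZMod_eq_of_dvd (h i)
  have hG_meas : MeasurableSet G := by
    refine (isOpen_of_congr (m - 1) fun x y h hx => ?_).measurableSet
    refine ⟨hS_congr x y (fun i => (dvd_pow_self _ (by omega)).trans (h i)) hx.1, fun i j => ?_⟩
    rw [← map_mul]
    refine (dvd_iff_dvd_of_dvd_sub (dvd_eval_sub_eval _ h)).2 ?_
    rw [map_mul]
    exact hx.2 i j
  have hGT : T ∩ G = G := Set.inter_eq_right.2 fun x hx => hx.1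
  -- The bound `2 r + 2 ≤ m` is built into the index type of the strata.
  have hdiff : T \ G = ⋃ l : {l : Σ r : ℕ, Fin n → ZMod (p ^ (r + 1)) // 2 * l.1 + 2 ≤ m},
      stratum f S l.1.1 l.1.2 := by
    ext x
    rw [Set.mem_iUnion]
    constructor
    · rintro ⟨hxT, hxG⟩
      obtain ⟨r, d, hr, hx⟩ := (not_forall_dvd_iff hm hxT).1 fun h => hxG ⟨hxT, h⟩
      exact ⟨⟨⟨r, d⟩, hr⟩, hx⟩
    · rintro ⟨⟨⟨r, d⟩, hr⟩, hx⟩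
      exact ⟨hx.1, fun hxG => (not_forall_dvd_iff hm hx.1).2 ⟨r, d, hr, hx⟩ hxG.2⟩
  rw [← integral_inter_add_sdiff hG_meas hg_int.integrableOn, hGT, hdiff, integral_iUnion
    (s := fun l : {l : Σ r : ℕ, Fin n → ZMod (p ^ (r + 1)) // 2 * l.1 + 2 ≤ m} =>
      stratum f S l.1.1 l.1.2) (fun l => (isOpen_stratum f S _ _).measurableSet)
    (fun a b hab => stratum_disjoint f S (Subtype.coe_injective.ne hab)) hg_int.integrableOn]
  refine add_eq_left.2 (Eq.trans (tsum_congr ?_) tsum_zero)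
  exact fun l => hzero l.1.1 l.1.2 l.2
end

section
/- Let p be a prime, n ≥ 1 and m ≥ 2 integers, set m̄ = m/2 if m is even and m̄ = (m+1)/2 if m is odd, and let ψ be an additive character of ℚ_p that is trivial on p^m ℤ_p. Then for every f ∈ ℤ_p[x₁,…,xₙ] and every x₀ ∈ ℤ_pⁿ, ∫_{x₀ + (p^{m̄} ℤ_p)ⁿ} ψ(f(x)) dx = ∫_{(p^{m̄} ℤ_p)ⁿ} ψ( f(x₀) + Σ_{i=1}ⁿ (∂ᵢf)(x₀) · yᵢ ) dy; that is, on such a coset the oscillatory integral of ψ∘f equals that of the affine-linear approximation of f at x₀. -/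
/-!
Translating by `x₀` turns the left-hand integral into `∫ ψ(f(x₀ + y)) dy` over the box
`(p^m̄ ℤ_p)ⁿ`, because Haar measure is translation invariant. On this box the integrands agree
pointwise: the Taylor remainder of order one lies in the square of the ideal generated by the
coordinates of `y` (`eval_add_sub_linear_mem_sq`), hence in `p^{2m̄} ℤ_p ⊆ p^m ℤ_p`, where `ψ` is
trivial.
-/


open MeasureTheory MvPolynomial

/-- First-order Taylor expansion with an integral remainder: no factorials need be inverted, since
the remainder is a polynomial all of whose terms have degree at least two in `y`. -/
lemma eval_add_sub_linear_mem_sq {R σ : Type*} [CommRing R] [Fintype σ] (I : Ideal R)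
    (f : MvPolynomial σ R) (a y : σ → R) (hy : ∀ i, y i ∈ I) :
    eval (a + y) f - (eval a f + ∑ i, eval a (pderiv i f) * y i) ∈ I ^ 2 := by
  classical
  induction f using MvPolynomial.induction_on with
  | C r => simp
  | add g h hg hh =>
    convert add_mem hg hh using 1
    simp only [map_add, add_mul, Finset.sum_add_distrib]
    ring
  | mul_X g j hg =>
    have hL : ∑ i, eval a (pderiv i g) * y i ∈ I :=
      sum_mem fun i _ => I.mul_mem_left _ (hy i)
    have h2 : (∑ i, eval a (pderiv i g) * y i) * y j ∈ I ^ 2 := by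
      rw [sq]
      exact Ideal.mul_mem_mul hL (hy j)
    have hsum : ∑ i, eval a (pderiv i (g * X j)) * y i
        = (∑ i, eval a (pderiv i g) * y i) * a j + eval a g * y j := by
      simp only [Derivation.leibniz, pderiv_X, smul_eq_mul, map_add, map_mul, eval_X, add_mul,
        Finset.sum_add_distrib]
      rw [add_comm, Finset.sum_mul]
      congr 1
      · exact Finset.sum_congr rfl fun i _ => by ring
      · rw [Finset.sum_eq_single j]
        · simp
        · intro i _ hij
          simp [Pi.single_apply, hij.symm]
        · simp
    rw [hsum]
    convert add_mem ((I ^ 2).mul_mem_right (a j + y j) hg) h2 using 1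
    simp only [map_mul, eval_X, Pi.add_apply]
    ring

/-- Let `p` be a prime, `n ≥ 1` and `m ≥ 2` integers, set `m̄ = m/2` if `m` is even
and `m̄ = (m+1)/2` if `m` is odd, and let `ψ` be an additive character of `ℚ_p` that is trivial
on `p^m ℤ_p`.  Then for every `f ∈ ℤ_p[x₁,…,xₙ]` and every `x₀ ∈ ℤ_pⁿ`,
`∫_{x₀ + (p^m̄ ℤ_p)ⁿ} ψ(f(x)) dx = ∫_{(p^m̄ ℤ_p)ⁿ} ψ(f(x₀) + Σᵢ (∂ᵢf)(x₀)·yᵢ) dy`,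
with the Haar measure on `ℤ_pⁿ` normalized so that `ℤ_pⁿ` has measure `1`. -/
theorem stmt_3 {p : ℕ} [Fact p.Prime] (n m mbar : ℕ) (hn : 1 ≤ n) (hm : 2 ≤ m)
    (hmbar : mbar = if Even m then m / 2 else (m + 1) / 2)
    (ψ : ℚ_[p] → ℂ) (hψ_cont : Continuous ψ)
    (hψ_add : ∀ a b : ℚ_[p], ψ (a + b) = ψ a * ψ b)
    (hψ_norm : ∀ a : ℚ_[p], ‖ψ a‖ = 1)
    (hψ_triv : ∀ z : ℚ_[p], ‖z‖ ≤ (p : ℝ) ^ (-(m : ℤ)) → ψ z = 1)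
    (f : MvPolynomial (Fin n) ℤ_[p]) (x₀ : Fin n → ℤ_[p])
    [MeasurableSpace ℤ_[p]] [BorelSpace ℤ_[p]]
    (μ : Measure (Fin n → ℤ_[p])) [μ.IsAddHaarMeasure] (hμ : μ Set.univ = 1) :
    (∫ x in {x : Fin n → ℤ_[p] | ∀ i, ‖x i - x₀ i‖ ≤ (p : ℝ) ^ (-(mbar : ℤ))},
      ψ ((eval x f : ℤ_[p]) : ℚ_[p]) ∂μ)
    = ∫ y in {y : Fin n → ℤ_[p] | ∀ i, ‖y i‖ ≤ (p : ℝ) ^ (-(mbar : ℤ))},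
      ψ (((eval x₀ f + ∑ i, eval x₀ (pderiv i f) * y i : ℤ_[p]) : ℚ_[p])) ∂μ := by
  have hm2 : m ≤ mbar * 2 := by
    split_ifs at hmbar with h
    · obtain ⟨k, hk⟩ := h
      omega
    · omega
  have hmeas : MeasurableSet {y : Fin n → ℤ_[p] | ∀ i, ‖y i‖ ≤ (p : ℝ) ^ (-(mbar : ℤ))} := by
    rw [Set.setOf_forall]
    refine MeasurableSet.iInter fun i => ?_
    have hc : IsClosed {z : ℤ_[p] | ‖z‖ ≤ (p : ℝ) ^ (-(mbar : ℤ))} :=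
      isClosed_le continuous_norm continuous_const
    exact hc.measurableSet.preimage (measurable_pi_apply i)
  rw [← (measurePreserving_add_left μ x₀).setIntegral_preimage_emb
    (measurableEmbedding_addLeft x₀)]
  simp only [Set.preimage_setOf_eq, Pi.add_apply, add_sub_cancel_left]
  refine setIntegral_congr_fun hmeas fun y hy => ?_
  have hyI : ∀ i, y i ∈ (Ideal.span {(p : ℤ_[p]) ^ mbar} : Ideal ℤ_[p]) := fun i =>
    (PadicInt.norm_le_pow_iff_mem_span_pow _ _).1 (hy i)
  have hrem := eval_add_sub_linear_mem_sq _ f x₀ y hyI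
  rw [Ideal.span_singleton_pow, ← pow_mul] at hrem
  have hrem_m := Ideal.span_singleton_le_span_singleton.2 (pow_dvd_pow (p : ℤ_[p]) hm2) hrem
  have h1 := hψ_triv _ ((PadicInt.norm_le_pow_iff_mem_span_pow _ _).2 hrem_m)
  have h2 := hψ_add ((eval x₀ f + ∑ i, eval x₀ (pderiv i f) * y i : ℤ_[p]) : ℚ_[p])
    ((eval (x₀ + y) f - (eval x₀ f + ∑ i, eval x₀ (pderiv i f) * y i) : ℤ_[p]) : ℚ_[p])
  rw [h1, mul_one, ← PadicInt.coe_add, add_sub_cancel] at h2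
  exact h2
end

section
/- Let U and V be topological spaces with U Noetherian, let g : U → V be a continuous map, and let W be a closed subset of U. Assume that for every y in the image g(U): (i) the fiber g⁻¹(y) is an irreducible subset of U, and (ii) g⁻¹(y) ∩ W ≠ g⁻¹(y), i.e. the fiber g⁻¹(y) is not contained in W. Then W is not an irreducible component of U. -/
/-- Let `U` and `V` be topological spaces with `U` Noetherian, let `g : U → V` be a
continuous map, and let `W` be a closed subset of `U`.  Assume that for every `y` in the image
of `g`: (i) the fiber `g⁻¹(y)` is an irreducible subset of `U`, and (ii) the fiber `g⁻¹(y)` is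
not contained in `W`.  Then `W` is not an irreducible component of `U`. -/
theorem stmt_7 {U V : Type*} [TopologicalSpace U] [TopologicalSpace V]
    [TopologicalSpace.NoetherianSpace U]
    (g : U → V) (hg : Continuous g) (W : Set U) (hW : IsClosed W)
    (h : ∀ y ∈ Set.range g, IsIrreducible (g ⁻¹' {y}) ∧ ¬ g ⁻¹' {y} ⊆ W) :
    W ∉ irreducibleComponents U := by
  intro hWc
  -- In a Noetherian space a component contains a nonempty open set: the complement of the
  -- finitely many other components.
  obtain ⟨o, ho, ⟨x, hx⟩, hoW⟩ :=
    TopologicalSpace.NoetherianSpace.exists_isOpen_nonempty_subset_irreducibleComponent W hWc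
  obtain ⟨hirr, hnot⟩ := h (g x) ⟨x, rfl⟩
  -- The irreducible fiber through `x` meets `o`, so its trace on `o` is dense in it.
  exact hnot ((subset_closure_inter_of_isPreirreducible_of_isOpen hirr.isPreirreducible ho
    ⟨x, rfl, hx⟩).trans (closure_minimal (Set.inter_subset_right.trans hoW) hW))
end

section
/- Let p be a prime, n ≥ 1 and m ≥ 2 integers, and let ψ be an additive character of ℚ_p of conductor m. Let f ∈ ℤ_p[x₁,…,xₙ] and let S be any subset of 𝔽_pⁿ. Then | ∫_{{x ∈ ℤ_pⁿ : x̄ ∈ S}} ψ(f(x)) dx | ≤ Vol( { x ∈ ℤ_pⁿ : x̄ ∈ S and v_p(∂ᵢf(x)·∂ⱼf(x)) ≥ m−1 for all 1 ≤ i,j ≤ n } ), where Vol denotes the Haar measure of the set. -/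
open MeasureTheory MvPolynomial

/-!
Put `r = ⌈m/2⌉`. Since `2r ≥ m`, the first-order Taylor expansion gives, for `t ∈ ℤ_p`,
`ψ(f(x + pʳ t eᵢ)) = ψ(f(x)) · ψ(pʳ t ∂ᵢf(x))`. Where `pʳ ∂ᵢf(x) ∉ p^m ℤ_p`, the number
`ζ = ψ(pʳ ∂ᵢf(x))` is a `p^m`-th root of unity different from `1`, so the sum of these values over
`0 ≤ t < p^m` is zero. Averaging over translations in the direction `eᵢ` therefore kills the
integral of `ψ ∘ f` over any measurable set that is stable under these translations and on which
`pʳ ∂ᵢf ∉ p^m ℤ_p` (`setIntegral_eq_zero`). The conditions `pʳ ∂ⱼf(x) ∈ p^m ℤ_p` are themselves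
stable under translation by `pʳ ℤ_pⁿ`, and so is the condition on the residue class, as `r ≥ 1`;
hence they can be imposed one index at a time without changing the integral
(`setIntegral_eq_of_finset`). What remains is the integral of a function of modulus `1` over the
set where `p^(m-r)` divides every `∂ᵢf(x)`; there `p^(m-1)` divides every `∂ᵢf(x) ∂ⱼf(x)`, because
`2(m-r) ≥ m-1`.
-/

/-- First-order Taylor expansion of a polynomial in the direction of one coordinate. -/
theorem sq_dvd_eval_add_single_sub {R σ : Type*} [CommRing R] [DecidableEq σ]
    (f : MvPolynomial σ R) (x : σ → R) (i : σ) (h : R) :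
    h ^ 2 ∣ eval (x + Pi.single i h) f - eval x f - h * eval x (pderiv i f) := by
  induction f using MvPolynomial.induction_on with
  | C a => simp
  | add f g hf hg =>
    have := dvd_add hf hg
    simp only [map_add]
    convert this using 1
    ring
  | mul_X f j hf =>
    obtain ⟨c, hc⟩ := hf
    have hc' : eval (x + Pi.single i h) f
        = h ^ 2 * c + eval x f + h * eval x (pderiv i f) := by
      linear_combination hc
    simp only [map_mul, eval_X, Pi.add_apply, Derivation.leibniz, pderiv_X, smul_eq_mul, map_add,
      hc']
    by_cases hij : j = i
    · subst hij
      simp only [Pi.single_eq_same, map_one]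
      exact ⟨c * x j + c * h + eval x (pderiv j f), by ring⟩
    · rw [Pi.single_eq_of_ne hij, Pi.single_eq_of_ne hij]
      simp only [map_zero]
      exact ⟨c * x j, by ring⟩

theorem dvd_eval_add_single_sub {R σ : Type*} [CommRing R] [DecidableEq σ]
    (f : MvPolynomial σ R) (x : σ → R) (i : σ) (h : R) :
    h ∣ eval (x + Pi.single i h) f - eval x f := by
  obtain ⟨c, hc⟩ := sq_dvd_eval_add_single_sub f x i h
  exact ⟨h * c + eval x (pderiv i f), by linear_combination hc⟩

theorem padicInt_norm_le_iff_dvd {p : ℕ} [Fact p.Prime] (x : ℤ_[p]) (k : ℕ) :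
    ‖x‖ ≤ (p : ℝ) ^ (-(k : ℤ)) ↔ (p : ℤ_[p]) ^ k ∣ x := by
  rw [PadicInt.norm_le_pow_iff_mem_span_pow, Ideal.mem_span_singleton]

theorem padicInt_dvd_pow_of_not_pow_succ_dvd {p : ℕ} [Fact p.Prime] (z : ℤ_[p]) (k : ℕ)
    (hz : ¬ (p : ℤ_[p]) ^ (k + 1) ∣ z) : z ∣ (p : ℤ_[p]) ^ k := by
  rcases ValuationRing.dvd_total z ((p : ℤ_[p]) ^ k) with h | ⟨u, rfl⟩
  · exact h
  · have hu : IsUnit u := by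
      rw [PadicInt.isUnit_iff]
      by_contra hne
      have hlt : ‖u‖ < 1 := lt_of_le_of_ne (PadicInt.norm_le_one u) hne
      rw [PadicInt.norm_lt_one_iff_dvd] at hlt
      exact hz (by rw [pow_succ]; exact mul_dvd_mul_left _ hlt)
    exact (hu.dvd_mul_right.mp dvd_rfl)

theorem char_nat_mul {p : ℕ} [Fact p.Prime] {φ : ℤ_[p] → ℂ}
    (hadd : ∀ a b, φ (a + b) = φ a * φ b) (h0 : φ 0 = 1) (a : ℤ_[p]) (N : ℕ) :
    φ (N * a) = φ a ^ N := by
  induction N with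
  | zero => simp [h0]
  | succ N ih => rw [Nat.cast_succ, add_mul, one_mul, hadd, ih, pow_succ]

/-- A character of `ℤ_p` of conductor `k + 1` is nontrivial at every element outside
`p^(k+1) ℤ_p`: the integer multiples of such a `z` are dense in `z ℤ_p ⊇ p^k ℤ_p`. -/
theorem char_ne_one {p : ℕ} [Fact p.Prime] {φ : ℤ_[p] → ℂ} {k : ℕ}
    (hadd : ∀ a b, φ (a + b) = φ a * φ b)
    (htriv : ∀ z, (p : ℤ_[p]) ^ (k + 1) ∣ z → φ z = 1)
    (hnon : ∃ z, (p : ℤ_[p]) ^ k ∣ z ∧ φ z ≠ 1)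
    (z : ℤ_[p]) (hz : ¬ (p : ℤ_[p]) ^ (k + 1) ∣ z) : φ z ≠ 1 := by
  intro h1
  obtain ⟨z₀, hz₀, hne⟩ := hnon
  obtain ⟨w, rfl⟩ := (padicInt_dvd_pow_of_not_pow_succ_dvd z k hz).trans hz₀
  have hw := PadicInt.appr_spec (k + 1) w
  rw [Ideal.mem_span_singleton] at hw
  apply hne
  have hsplit : z * w = (w.appr (k + 1) : ℕ) * z + z * (w - (w.appr (k + 1) : ℕ)) := by ring
  rw [hsplit, hadd, char_nat_mul hadd (htriv 0 (dvd_zero _)), h1,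
    htriv _ (hw.mul_left z), one_pow, one_mul]

theorem isClosed_dvd_eval {p : ℕ} [Fact p.Prime] {n : ℕ} (m r : ℕ)
    (g : MvPolynomial (Fin n) ℤ_[p]) :
    IsClosed {x : Fin n → ℤ_[p] | (p : ℤ_[p]) ^ m ∣ (p : ℤ_[p]) ^ r * eval x g} := by
  simp only [← padicInt_norm_le_iff_dvd]
  have := MvPolynomial.continuous_eval g
  exact isClosed_le (by fun_prop) continuous_const

section

variable {p : ℕ} [Fact p.Prime] {n : ℕ} [MeasurableSpace ℤ_[p]] [BorelSpace ℤ_[p]]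
  (μ : Measure (Fin n → ℤ_[p])) [μ.IsAddHaarMeasure]

theorem integrable_char_eval {φ : ℤ_[p] → ℂ} (hcont : Continuous φ)
    (f : MvPolynomial (Fin n) ℤ_[p]) : Integrable (fun x => φ (eval x f)) μ :=
  (hcont.comp (MvPolynomial.continuous_eval f)).integrable_of_hasCompactSupport
    (HasCompactSupport.of_compactSpace _)

/-- Cancellation in the direction `i`: the translations by `p^r t eᵢ` preserve `D`, and summing
the translated integrand over `0 ≤ t < p^m` gives zero pointwise on `D`. -/
theorem setIntegral_eq_zero {φ : ℤ_[p] → ℂ} (hcont : Continuous φ) {m r : ℕ} (hr : m ≤ 2 * r)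
    (hadd : ∀ a b, φ (a + b) = φ a * φ b)
    (htriv : ∀ z, (p : ℤ_[p]) ^ m ∣ z → φ z = 1)
    (hne : ∀ z, ¬ (p : ℤ_[p]) ^ m ∣ z → φ z ≠ 1)
    (f : MvPolynomial (Fin n) ℤ_[p]) (i : Fin n) (D : Set (Fin n → ℤ_[p]))
    (hD : MeasurableSet D)
    (hinv : ∀ x t, x ∈ D → x + Pi.single i ((p : ℤ_[p]) ^ r * t) ∈ D)
    (hDi : ∀ x ∈ D, ¬ (p : ℤ_[p]) ^ m ∣ (p : ℤ_[p]) ^ r * eval x (pderiv i f)) :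
    ∫ x in D, φ (eval x f) ∂μ = 0 := by
  have h0 : φ 0 = 1 := htriv 0 (dvd_zero _)
  have htaylor : ∀ (x : Fin n → ℤ_[p]) (t : ℕ),
      φ (eval (x + Pi.single i ((p : ℤ_[p]) ^ r * (t : ℤ_[p]))) f)
        = φ (eval x f) * φ ((p : ℤ_[p]) ^ r * eval x (pderiv i f)) ^ t := by
    intro x t
    set h := (p : ℤ_[p]) ^ r * (t : ℤ_[p]) with hh
    have hdvd := sq_dvd_eval_add_single_sub f x i h
    have hpm : (p : ℤ_[p]) ^ m ∣ h ^ 2 := by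
      rw [hh, mul_pow, ← pow_mul]
      exact (pow_dvd_pow _ (by omega)).mul_right _
    have hsplit : eval (x + Pi.single i h) f
        = eval x f + (t * ((p : ℤ_[p]) ^ r * eval x (pderiv i f)) +
          (eval (x + Pi.single i h) f - eval x f - h * eval x (pderiv i f))) := by
      rw [hh]; ring
    rw [hsplit, hadd, hadd, char_nat_mul hadd h0, htriv _ (hpm.trans hdvd), mul_one]
  have hshift : ∀ t : ℕ, ∫ x in D, φ (eval x f) ∂μ
      = ∫ x in D, φ (eval x f) * φ ((p : ℤ_[p]) ^ r * eval x (pderiv i f)) ^ t ∂μ := by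
    intro t
    rw [← integral_indicator hD, ← integral_indicator hD,
      ← integral_add_right_eq_self _ (Pi.single i ((p : ℤ_[p]) ^ r * (t : ℤ_[p])))]
    congr 1
    funext x
    by_cases hx : x ∈ D
    · rw [Set.indicator_of_mem (hinv x t hx), Set.indicator_of_mem hx, htaylor]
    · have hx' : x + Pi.single i ((p : ℤ_[p]) ^ r * (t : ℤ_[p])) ∉ D := by
        intro hmem
        apply hx
        have := hinv _ (-(t : ℤ_[p])) hmem
        rwa [add_assoc, ← Pi.single_add, mul_neg, add_neg_cancel, Pi.single_zero, add_zero] at this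
      rw [Set.indicator_of_notMem hx', Set.indicator_of_notMem hx]
  have hint : ∀ t : ℕ, Integrable
      (fun x => φ (eval x f) * φ ((p : ℤ_[p]) ^ r * eval x (pderiv i f)) ^ t)
      (μ.restrict D) := by
    intro t
    refine Integrable.restrict (Continuous.integrable_of_hasCompactSupport ?_
      (HasCompactSupport.of_compactSpace _))
    have h1 := MvPolynomial.continuous_eval f
    have h2 := MvPolynomial.continuous_eval (pderiv i f)
    exact (hcont.comp h1).mul ((hcont.comp (continuous_const.mul h2)).pow t)
  have hsum : ((p ^ m : ℕ) : ℂ) * ∫ x in D, φ (eval x f) ∂μ = 0 := by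
    calc ((p ^ m : ℕ) : ℂ) * ∫ x in D, φ (eval x f) ∂μ
        = ∑ t ∈ Finset.range (p ^ m), ∫ x in D, φ (eval x f) ∂μ := by simp
      _ = ∑ t ∈ Finset.range (p ^ m),
            ∫ x in D, φ (eval x f) * φ ((p : ℤ_[p]) ^ r * eval x (pderiv i f)) ^ t ∂μ :=
          Finset.sum_congr rfl fun t _ => hshift t
      _ = ∫ x in D, ∑ t ∈ Finset.range (p ^ m),
            φ (eval x f) * φ ((p : ℤ_[p]) ^ r * eval x (pderiv i f)) ^ t ∂μ :=
          (integral_finsetSum _ fun t _ => hint t).symm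
      _ = 0 := by
          apply setIntegral_eq_zero_of_forall_eq_zero
          intro x hx
          have hζ : φ ((p : ℤ_[p]) ^ r * eval x (pderiv i f)) ^ (p ^ m) = 1 := by
            rw [← char_nat_mul hadd h0]
            exact htriv _ (by push_cast; exact dvd_mul_right _ _)
          rw [← Finset.mul_sum, geom_sum_eq (hne _ (hDi x hx)), hζ, sub_self, zero_div, mul_zero]
  have hp : ((p ^ m : ℕ) : ℂ) ≠ 0 := by
    exact_mod_cast pow_ne_zero m (Fact.out : p.Prime).ne_zero
  exact (mul_eq_zero.mp hsum).resolve_left hp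

/-- Imposing the divisibility `p^m ∣ p^r ∂ⱼf` for the indices `j` in a finite set does not change
the integral. -/
theorem setIntegral_eq_of_finset {φ : ℤ_[p] → ℂ} (hcont : Continuous φ) {m r : ℕ}
    (hr : m ≤ 2 * r) (hadd : ∀ a b, φ (a + b) = φ a * φ b)
    (htriv : ∀ z, (p : ℤ_[p]) ^ m ∣ z → φ z = 1)
    (hne : ∀ z, ¬ (p : ℤ_[p]) ^ m ∣ z → φ z ≠ 1)
    (f : MvPolynomial (Fin n) ℤ_[p]) (A : Set (Fin n → ℤ_[p])) (hA : MeasurableSet A)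
    (hinv : ∀ x i t, x ∈ A → x + Pi.single i ((p : ℤ_[p]) ^ r * t) ∈ A)
    (s : Finset (Fin n)) :
    ∫ x in A, φ (eval x f) ∂μ
      = ∫ x in A ∩ {x | ∀ j ∈ s, (p : ℤ_[p]) ^ m ∣ (p : ℤ_[p]) ^ r * eval x (pderiv j f)},
          φ (eval x f) ∂μ := by
  have hstep : ∀ (g : MvPolynomial (Fin n) ℤ_[p]) (x : Fin n → ℤ_[p]) (i : Fin n) (t : ℤ_[p]),
      (p : ℤ_[p]) ^ m ∣ (p : ℤ_[p]) ^ r * eval (x + Pi.single i ((p : ℤ_[p]) ^ r * t)) g ↔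
      (p : ℤ_[p]) ^ m ∣ (p : ℤ_[p]) ^ r * eval x g := by
    intro g x i t
    refine dvd_iff_dvd_of_dvd_sub ?_
    rw [← mul_sub]
    have h1 : (p : ℤ_[p]) ^ r * (p : ℤ_[p]) ^ r ∣ (p : ℤ_[p]) ^ r *
        (eval (x + Pi.single i ((p : ℤ_[p]) ^ r * t)) g - eval x g) :=
      mul_dvd_mul_left _ ((dvd_mul_right _ t).trans (dvd_eval_add_single_sub g x i _))
    rw [← pow_add] at h1
    exact (pow_dvd_pow _ (by omega)).trans h1
  induction s using Finset.induction_on with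
  | empty => simp
  | insert i s his ih =>
    have hmeas : MeasurableSet
        {x : Fin n → ℤ_[p] |
          ∀ j ∈ s, (p : ℤ_[p]) ^ m ∣ (p : ℤ_[p]) ^ r * eval x (pderiv j f)} := by
      simp only [Set.ofPred_forall]
      exact (isClosed_biInter fun j _ => isClosed_dvd_eval m r (pderiv j f)).measurableSet
    have hmeasi := (isClosed_dvd_eval (p := p) m r (pderiv i f)).measurableSet
    rw [ih, ← integral_inter_add_sdiff hmeasi (integrable_char_eval μ hcont f).integrableOn,
      setIntegral_eq_zero μ hcont hr hadd htriv hne f i _ ((hA.inter hmeas).diff hmeasi)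
        (fun x t hx => ⟨⟨hinv x i t hx.1.1, fun j hj => (hstep _ x i t).2 (hx.1.2 j hj)⟩,
          fun hmem => hx.2 ((hstep _ x i t).1 hmem)⟩)
        (fun x hx => hx.2), add_zero]
    congr 2
    ext x
    simp only [Set.mem_inter_iff, Set.mem_ofPred_eq, Finset.forall_mem_insert]
    tauto

end

theorem toZMod_eq_of_dvd_sub {p : ℕ} [Fact p.Prime] {a b : ℤ_[p]} (h : (p : ℤ_[p]) ∣ a - b) :
    PadicInt.toZMod a = PadicInt.toZMod b := by
  obtain ⟨c, hc⟩ := h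
  rw [← sub_eq_zero, ← map_sub, hc, map_mul, map_natCast, CharP.cast_eq_zero, zero_mul]

theorem isOpen_residue_mem {p : ℕ} [Fact p.Prime] {n : ℕ} (S : Set (Fin n → ZMod p)) :
    IsOpen {x : Fin n → ℤ_[p] | (fun i => PadicInt.toZMod (x i)) ∈ S} := by
  rw [Metric.isOpen_iff]
  intro x hx
  refine ⟨1, one_pos, fun y hy => ?_⟩
  have : (fun i => PadicInt.toZMod (y i)) = fun i => PadicInt.toZMod (x i) := by
    funext i
    apply toZMod_eq_of_dvd_sub
    rw [← PadicInt.norm_lt_one_iff_dvd, ← dist_eq_norm]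
    exact (dist_le_pi_dist y x i).trans_lt hy
  rw [Set.mem_ofPred_eq, this]
  exact hx

/-- Let `p` be a prime, `n ≥ 1` and `m ≥ 2` integers, and let `ψ` be an additive
character of `ℚ_p` of conductor `m`.  Let `f ∈ ℤ_p[x₁,…,xₙ]` and `S ⊆ 𝔽_pⁿ`.  Then
`|∫_{x̄ ∈ S} ψ(f(x)) dx| ≤ Vol {x ∈ ℤ_pⁿ : x̄ ∈ S, v_p(∂ᵢf(x)·∂ⱼf(x)) ≥ m-1 ∀ i,j}`,
with the Haar measure on `ℤ_pⁿ` normalized so that `ℤ_pⁿ` has measure `1`.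
Valuation conditions `v_p(a) ≥ m-1` are expressed via the norm as `‖a‖ ≤ p^{-(m-1)}`. -/
theorem stmt_11 {p : ℕ} [Fact p.Prime] (n m : ℕ) (hn : 1 ≤ n) (hm : 2 ≤ m)
    (ψ : ℚ_[p] → ℂ) (hψ_cont : Continuous ψ)
    (hψ_add : ∀ a b : ℚ_[p], ψ (a + b) = ψ a * ψ b)
    (hψ_norm : ∀ a : ℚ_[p], ‖ψ a‖ = 1)
    (hψ_triv : ∀ z : ℚ_[p], ‖z‖ ≤ (p : ℝ) ^ (-(m : ℤ)) → ψ z = 1)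
    (hψ_nontriv : ∃ z : ℚ_[p], ‖z‖ ≤ (p : ℝ) ^ (-((m : ℤ) - 1)) ∧ ψ z ≠ 1)
    (f : MvPolynomial (Fin n) ℤ_[p]) (S : Set (Fin n → ZMod p))
    [MeasurableSpace ℤ_[p]] [BorelSpace ℤ_[p]]
    (μ : Measure (Fin n → ℤ_[p])) [μ.IsAddHaarMeasure] (hμ : μ Set.univ = 1) :
    ‖∫ x in {x : Fin n → ℤ_[p] | (fun i => PadicInt.toZMod (x i)) ∈ S},
        ψ ((eval x f : ℤ_[p]) : ℚ_[p]) ∂μ‖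
    ≤ (μ {x : Fin n → ℤ_[p] | (fun i => PadicInt.toZMod (x i)) ∈ S ∧
        ∀ i j : Fin n, ‖eval x (pderiv i f) * eval x (pderiv j f)‖ ≤
          (p : ℝ) ^ (-((m : ℤ) - 1))}).toReal := by
  obtain ⟨k, rfl⟩ : ∃ k, m = k + 1 := ⟨m - 1, by omega⟩
  set A : Set (Fin n → ℤ_[p]) := {x | (fun i => PadicInt.toZMod (x i)) ∈ S} with hA
  have hcast : (-(((k + 1 : ℕ) : ℤ) - 1)) = -(k : ℤ) := by push_cast; ring
  rw [hcast] at hψ_nontriv ⊢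
  set φ : ℤ_[p] → ℂ := fun a => ψ (a : ℚ_[p]) with hφ
  have hcont : Continuous φ := hψ_cont.comp continuous_subtype_val
  have hadd : ∀ a b, φ (a + b) = φ a * φ b := fun a b => by
    simp only [hφ, PadicInt.coe_add, hψ_add]
  have htriv : ∀ z, (p : ℤ_[p]) ^ (k + 1) ∣ z → φ z = 1 := fun z hz =>
    hψ_triv _ (by rw [← PadicInt.norm_def]; exact (padicInt_norm_le_iff_dvd z _).2 hz)
  have hnon : ∃ z, (p : ℤ_[p]) ^ k ∣ z ∧ φ z ≠ 1 := by
    obtain ⟨z, hz, hne⟩ := hψ_nontriv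
    have hz1 : ‖z‖ ≤ 1 := hz.trans (zpow_le_one_of_nonpos₀
      (by exact_mod_cast (Fact.out : p.Prime).one_lt.le) (by omega))
    exact ⟨⟨z, hz1⟩, (padicInt_norm_le_iff_dvd _ _).1 hz, hne⟩
  -- `r = ⌈m / 2⌉` for `m = k + 1`
  obtain ⟨r, hr1, hr2⟩ : ∃ r, k + 1 ≤ 2 * r ∧ 2 * r ≤ k + 2 := ⟨(k + 2) / 2, by omega, by omega⟩
  have hinv : ∀ x i t, x ∈ A → x + Pi.single i ((p : ℤ_[p]) ^ r * t) ∈ A := by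
    intro x i t hx
    have : (fun j => PadicInt.toZMod ((x + Pi.single i ((p : ℤ_[p]) ^ r * t) : Fin n → ℤ_[p]) j))
        = fun j => PadicInt.toZMod (x j) := by
      funext j
      apply toZMod_eq_of_dvd_sub
      rw [Pi.add_apply, add_sub_cancel_left]
      by_cases hij : j = i
      · subst hij
        rw [Pi.single_eq_same]
        exact (dvd_pow_self _ (by omega)).mul_right _
      · rw [Pi.single_eq_of_ne hij]
        exact dvd_zero _
    rw [hA, Set.mem_ofPred_eq, this]
    exact hx
  rw [setIntegral_eq_of_finset μ hcont hr1 hadd htriv (char_ne_one hadd htriv hnon) f A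
    (isOpen_residue_mem S).measurableSet hinv Finset.univ]
  refine (norm_setIntegral_le_of_norm_le_const (C := 1) (measure_lt_top μ _)
    fun x _ => (hψ_norm _).le).trans ?_
  rw [one_mul]
  refine ENNReal.toReal_mono (measure_ne_top μ _) (measure_mono ?_)
  rintro x ⟨hxA, hx⟩
  refine ⟨hxA, fun i j => (padicInt_norm_le_iff_dvd _ _).2 ?_⟩
  have hdvd : ∀ i, (p : ℤ_[p]) ^ (k + 1 - r) ∣ eval x (pderiv i f) := by
    intro i
    have h := hx i (Finset.mem_univ i)
    rw [show k + 1 = r + (k + 1 - r) by omega, pow_add] at h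
    exact (mul_dvd_mul_iff_left
      (pow_ne_zero r (Nat.cast_ne_zero.2 (Fact.out : p.Prime).ne_zero))).1 h
  have h := mul_dvd_mul (hdvd i) (hdvd j)
  rw [← pow_add] at h
  exact (pow_dvd_pow _ (by omega)).trans h
end
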